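/- arXiv:hep-th/9404042 — 3 statements merged into one kernel-verified Lean document; each statement's English description precedes it below -/
import Mathlib

section
/- Let τ be a symmetric 2×2 complex matrix with positive definite imaginary part, z ∈ ℂ², and write θ̂[ε](z) := θ[ε](z|2τ). Then θ[11;00](0|τ)·θ[11;00](z|τ) = 2·θ̂[11;00](z)·θ̂[00;00](z) + 2·θ̂[10;00](z)·θ̂[01;00](z), and θ[11;11](0|τ)·θ[11;11](z|τ) = 2·θ̂[11;00](z)·θ̂[00;00](z) − 2·θ̂[10;00](z)·θ̂[01;00](z). -/
/-- Genus-2 Riemann theta function with characteristic `[a b; c d]`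
(`(a,b) = ε'`, `(c,d) = ε''`), evaluated at `z = (z1, z2)` and period matrix
`τ = ((t11, t12), (t12, t22))`. -/
noncomputable def theta2 (a b c d : ℝ) (z1 z2 t11 t12 t22 : ℂ) : ℂ :=
  ∑' m : ℤ × ℤ,
    Complex.exp
      ((Real.pi : ℂ) * Complex.I *
          (((m.1 : ℂ) + (a : ℂ) / 2) *
              (((m.1 : ℂ) + (a : ℂ) / 2) * t11 + ((m.2 : ℂ) + (b : ℂ) / 2) * t12) +
            ((m.2 : ℂ) + (b : ℂ) / 2) *
              (((m.1 : ℂ) + (a : ℂ) / 2) * t12 + ((m.2 : ℂ) + (b : ℂ) / 2) * t22)) +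
        2 * (Real.pi : ℂ) * Complex.I *
          (((m.1 : ℂ) + (a : ℂ) / 2) * (z1 + (c : ℂ) / 2) +
            ((m.2 : ℂ) + (b : ℂ) / 2) * (z2 + (d : ℂ) / 2)))

/-- The symmetric matrix `τ = ((t11, t12), (t12, t22))` has positive definite
imaginary part. -/
def posDefIm (t11 t12 t22 : ℂ) : Prop :=
  (!![t11.im, t12.im; t12.im, t22.im]).PosDef

/-!
If `m = k + l + σ` and `n = k - l` with `σ ∈ {0, 1}²`, then `k + σ / 2` and `l + σ / 2` are half the
sum and half the difference of `m` and `n`, and every pair `(m, n)` arises from exactly one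
`(σ, k, l)`. By the parallelogram law a product of two theta functions with period matrix `τ`
therefore splits into four products of theta functions with period matrix `2τ`, one for each `σ`.
Setting one argument to `0` and reducing the characteristics modulo `2` turns this addition theorem
into the duplication formulas; the four products then coincide in pairs up to sign.
-/

noncomputable section

open Complex
open scoped Real

/-- The summand of the genus-2 theta series, as a function of the lattice point `(x, y)` already
shifted by `ε' / 2` and of the argument `(u, v)` already shifted by `ε'' / 2`. -/
def thetaExp (t11 t12 t22 x y u v : ℂ) : ℂ :=
  exp (π * I * (x * (x * t11 + y * t12) + y * (x * t12 + y * t22)) +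
    2 * π * I * (x * u + y * v))

section Convergence

theorem exists_pos_mul_le_quadraticForm {p q r : ℝ} (hp : 0 < p) (hr : 0 < r)
    (hdet : 0 < p * r - q * q) :
    ∃ δ > 0, ∀ x y : ℝ, δ * (x ^ 2 + y ^ 2) ≤ p * x ^ 2 + 2 * q * x * y + r * y ^ 2 := by
  -- `det / trace` is a lower bound for the smaller eigenvalue.
  refine ⟨(p * r - q * q) / (p + r), by positivity, fun x y ↦ ?_⟩
  rw [div_mul_eq_mul_div, div_le_iff₀ (by positivity)]
  linarith [sq_nonneg (p * x + q * y), sq_nonneg (q * x + r * y)]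

theorem summable_exp_neg_quadratic {δ : ℝ} (hδ : 0 < δ) (x u : ℝ) :
    Summable fun n : ℤ ↦ Real.exp (-π * (δ * (n + x) ^ 2 + 2 * ((n + x) * u))) := by
  have hsum : Summable fun n : ℤ ↦ ‖jacobiTheta₂_term n (I * (δ * x + u : ℝ)) (I * δ)‖ :=
    ((summable_jacobiTheta₂_term_iff _ _).2 (by simpa using hδ)).norm
  refine (hsum.mul_left (Real.exp (-π * (δ * x ^ 2 + 2 * (x * u))))).congr fun n ↦ ?_
  rw [norm_jacobiTheta₂_term, ← Real.exp_add, I_mul_im, I_mul_im, ofReal_re, ofReal_re]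
  ring_nf

variable {t11 t12 t22 : ℂ}

namespace posDefIm

theorem exists_pos_mul_le (hτ : posDefIm t11 t12 t22) :
    ∃ δ > 0, ∀ x y : ℝ,
      δ * (x ^ 2 + y ^ 2) ≤ t11.im * x ^ 2 + 2 * t12.im * x * y + t22.im * y ^ 2 := by
  have hdet := Matrix.PosDef.det_pos hτ
  rw [Matrix.det_fin_two_of] at hdet
  exact exists_pos_mul_le_quadraticForm (Matrix.PosDef.diag_pos hτ (i := 0))
    (Matrix.PosDef.diag_pos hτ (i := 1)) hdet

theorem two_mul (hτ : posDefIm t11 t12 t22) : posDefIm (2 * t11) (2 * t12) (2 * t22) := by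
  simpa [posDefIm] using Matrix.PosDef.smul hτ (two_pos (α := ℝ))

end posDefIm

theorem norm_thetaExp (t11 t12 t22 : ℂ) (x y : ℝ) (u v : ℂ) :
    ‖thetaExp t11 t12 t22 x y u v‖ =
      Real.exp (-π * (t11.im * x ^ 2 + 2 * t12.im * x * y + t22.im * y ^ 2 +
        2 * (x * u.im) + 2 * (y * v.im))) := by
  rw [thetaExp, norm_exp]
  simp only [add_re, mul_re, ofReal_re, I_re, mul_zero, ofReal_im, I_im, mul_one, sub_self,
    zero_mul, sub_zero, add_im, mul_im, add_zero, zero_sub, re_ofNat, im_ofNat, Real.exp_eq_exp]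
  ring

theorem summable_norm_thetaExp (hτ : posDefIm t11 t12 t22) (x y : ℝ) (u v : ℂ) :
    Summable fun m : ℤ × ℤ ↦ ‖thetaExp t11 t12 t22 (m.1 + x) (m.2 + y) u v‖ := by
  obtain ⟨δ, hδ, hbound⟩ := hτ.exists_pos_mul_le
  have hprod := (summable_exp_neg_quadratic hδ x u.im).mul_of_nonneg
    (summable_exp_neg_quadratic hδ y v.im) (fun _ ↦ Real.exp_nonneg _) fun _ ↦ Real.exp_nonneg _
  refine hprod.of_nonneg_of_le (fun _ ↦ norm_nonneg _) fun m ↦ ?_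
  have hnorm := norm_thetaExp t11 t12 t22 (m.1 + x) (m.2 + y) u v
  push_cast at hnorm
  rw [hnorm, ← Real.exp_add, Real.exp_le_exp]
  linarith [mul_le_mul_of_nonneg_left (hbound (m.1 + x) (m.2 + y)) Real.pi_pos.le]

end Convergence

section Characteristics

variable (a b c d : ℝ) (z1 z2 t11 t12 t22 : ℂ)

theorem theta2_eq_tsum_thetaExp :
    theta2 a b c d z1 z2 t11 t12 t22 =
      ∑' m : ℤ × ℤ,
        thetaExp t11 t12 t22 (m.1 + (a / 2 : ℝ)) (m.2 + (b / 2 : ℝ)) (z1 + c / 2) (z2 + d / 2) := by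
  simp only [theta2, thetaExp, ofReal_div, ofReal_ofNat]

theorem theta2_add_two_mul_upper (j k : ℤ) :
    theta2 (a + 2 * j) (b + 2 * k) c d z1 z2 t11 t12 t22 = theta2 a b c d z1 z2 t11 t12 t22 := by
  rw [theta2_eq_tsum_thetaExp, theta2_eq_tsum_thetaExp, ← (Equiv.subRight (j, k)).tsum_eq]
  refine tsum_congr fun m ↦ ?_
  congr 1 <;> push_cast [Equiv.subRight_apply, Prod.fst_sub, Prod.snd_sub] <;> ring

theorem theta2_add_two_mul_lower (j k : ℤ) :
    theta2 a b (c + 2 * j) (d + 2 * k) z1 z2 t11 t12 t22 =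
      exp (π * I * (a * j + b * k)) * theta2 a b c d z1 z2 t11 t12 t22 := by
  simp only [theta2_eq_tsum_thetaExp, ← tsum_mul_left, thetaExp, ← exp_add]
  refine tsum_congr fun m ↦ exp_eq_exp_iff_exists_int.2 ⟨m.1 * j + m.2 * k, ?_⟩
  push_cast
  ring

theorem theta2_intCast_two_mul_lower (p q j k : ℤ) :
    theta2 p q (2 * j) (2 * k) z1 z2 t11 t12 t22 =
      (-1) ^ (p * j + q * k) * theta2 p q 0 0 z1 z2 t11 t12 t22 := by
  have h := theta2_add_two_mul_lower p q 0 0 z1 z2 t11 t12 t22 j k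
  rw [zero_add, zero_add] at h
  rw [h, ← exp_pi_mul_I, ← exp_int_mul]
  push_cast
  ring_nf

end Characteristics

section Addition

/-- Half the sum and half the difference of two integers have the same fractional part `σ / 2`:
the pair `(m, n)` corresponds to `(σ, k, l)` with `(m + n) / 2 = k + σ / 2` and
`(m - n) / 2 = l + σ / 2`. -/
def halfSumHalfDiffEquiv : Fin 2 × ℤ × ℤ ≃ ℤ × ℤ where
  toFun p := (p.2.1 + p.2.2 + (p.1 : ℕ), p.2.1 - p.2.2)
  invFun q := (⟨((q.1 + q.2) % 2).toNat, by omega⟩, (q.1 + q.2) / 2, (q.1 - q.2) / 2)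
  left_inv := by
    rintro ⟨σ, k, l⟩
    simp only [Prod.mk.injEq, Fin.ext_iff]
    omega
  right_inv := by
    rintro ⟨m, n⟩
    simp only [Prod.mk.injEq]
    omega

/-- `halfSumHalfDiffEquiv` applied to each of the two coordinates of a pair of points of `ℤ²`. -/
def latticeHalfSumHalfDiffEquiv :
    (Fin 2 × Fin 2) × (ℤ × ℤ) × (ℤ × ℤ) ≃ (ℤ × ℤ) × (ℤ × ℤ) :=
  ((Equiv.refl _).prodCongr (Equiv.prodProdProdComm ℤ ℤ ℤ ℤ)).trans <|
    (Equiv.prodProdProdComm (Fin 2) (Fin 2) (ℤ × ℤ) (ℤ × ℤ)).trans <|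
      (halfSumHalfDiffEquiv.prodCongr halfSumHalfDiffEquiv).trans <|
        Equiv.prodProdProdComm ℤ ℤ ℤ ℤ

theorem latticeHalfSumHalfDiffEquiv_apply (σ : Fin 2 × Fin 2)
    (q : (ℤ × ℤ) × (ℤ × ℤ)) :
    latticeHalfSumHalfDiffEquiv (σ, q) =
      ((q.1.1 + q.2.1 + (σ.1 : ℕ), q.1.2 + q.2.2 + (σ.2 : ℕ)),
        (q.1.1 - q.2.1, q.1.2 - q.2.2)) :=
  rfl

theorem tsum_eq_sum_tsum_halfSum_halfDiff {E : Type*} [NormedAddCommGroup E] [CompleteSpace E]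
    {f : (ℤ × ℤ) × (ℤ × ℤ) → E} (hf : Summable f) :
    ∑' p, f p = ∑ σ : Fin 2 × Fin 2, ∑' q : (ℤ × ℤ) × (ℤ × ℤ),
      f ((q.1.1 + q.2.1 + (σ.1 : ℕ), q.1.2 + q.2.2 + (σ.2 : ℕ)),
        (q.1.1 - q.2.1, q.1.2 - q.2.2)) := by
  have hcomp : Summable fun x ↦ f (latticeHalfSumHalfDiffEquiv x) :=
    latticeHalfSumHalfDiffEquiv.summable_iff.2 hf
  rw [← latticeHalfSumHalfDiffEquiv.tsum_eq, hcomp.tsum_prod, tsum_fintype]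
  simp only [latticeHalfSumHalfDiffEquiv_apply]

variable {t11 t12 t22 : ℂ}

theorem thetaExp_add_mul_thetaExp_sub (t11 t12 t22 p₁ p₂ q₁ q₂ u₁ u₂ v₁ v₂ : ℂ) :
    thetaExp t11 t12 t22 (p₁ + q₁) (p₂ + q₂) u₁ u₂ *
        thetaExp t11 t12 t22 (p₁ - q₁) (p₂ - q₂) v₁ v₂ =
      thetaExp (2 * t11) (2 * t12) (2 * t22) p₁ p₂ (u₁ + v₁) (u₂ + v₂) *
        thetaExp (2 * t11) (2 * t12) (2 * t22) q₁ q₂ (u₁ - v₁) (u₂ - v₂) := by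
  simp only [thetaExp, ← exp_add]
  ring_nf

theorem theta2_mul_theta2 (hτ : posDefIm t11 t12 t22) (a b c d a' b' c' d' : ℝ)
    (u₁ u₂ v₁ v₂ : ℂ) :
    theta2 a b c d u₁ u₂ t11 t12 t22 * theta2 a' b' c' d' v₁ v₂ t11 t12 t22 =
      ∑ σ : Fin 2 × Fin 2,
        theta2 ((a + a') / 2 + (σ.1 : ℕ)) ((b + b') / 2 + (σ.2 : ℕ)) (c + c') (d + d')
            (u₁ + v₁) (u₂ + v₂) (2 * t11) (2 * t12) (2 * t22) *
          theta2 ((a - a') / 2 + (σ.1 : ℕ)) ((b - b') / 2 + (σ.2 : ℕ)) (c - c') (d - d')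
            (u₁ - v₁) (u₂ - v₂) (2 * t11) (2 * t12) (2 * t22) := by
  simp only [theta2_eq_tsum_thetaExp]
  have hsum := summable_norm_thetaExp hτ (a / 2) (b / 2) (u₁ + c / 2) (u₂ + d / 2)
  have hsum' := summable_norm_thetaExp hτ (a' / 2) (b' / 2) (v₁ + c' / 2) (v₂ + d' / 2)
  rw [tsum_mul_tsum_of_summable_norm hsum hsum',
    tsum_eq_sum_tsum_halfSum_halfDiff (E := ℂ) (summable_mul_of_summable_norm hsum hsum')]
  refine Finset.sum_congr rfl fun σ _ ↦ ?_
  rw [tsum_mul_tsum_of_summable_norm (summable_norm_thetaExp hτ.two_mul _ _ _ _)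
    (summable_norm_thetaExp hτ.two_mul _ _ _ _)]
  refine tsum_congr fun ⟨k, l⟩ ↦ ?_
  convert thetaExp_add_mul_thetaExp_sub t11 t12 t22
    (k.1 + ((a + a') / 2 + (σ.1 : ℕ)) / 2) (k.2 + ((b + b') / 2 + (σ.2 : ℕ)) / 2)
    (l.1 + ((a - a') / 2 + (σ.1 : ℕ)) / 2) (l.2 + ((b - b') / 2 + (σ.2 : ℕ)) / 2)
    (u₁ + c / 2) (u₂ + d / 2) (v₁ + c' / 2) (v₂ + d' / 2) using 3 <;> push_cast <;> ring

end Addition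

section Duplication

variable {t11 t12 t22 : ℂ}

theorem theta2_zero_mul_theta2 (hτ : posDefIm t11 t12 t22) (a b c d : ℝ) (z1 z2 : ℂ) :
    theta2 a b c d 0 0 t11 t12 t22 * theta2 a b c d z1 z2 t11 t12 t22 =
      ∑ σ : Fin 2 × Fin 2,
        theta2 (a + (σ.1 : ℕ)) (b + (σ.2 : ℕ)) (2 * c) (2 * d)
            z1 z2 (2 * t11) (2 * t12) (2 * t22) *
          theta2 (σ.1 : ℕ) (σ.2 : ℕ) 0 0 z1 z2 (2 * t11) (2 * t12) (2 * t22) := by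
  rw [mul_comm, theta2_mul_theta2 hτ]
  simp only [add_self_div_two, sub_self, zero_div, zero_add, add_zero, sub_zero, two_mul c,
    two_mul d]

theorem theta2_one_one_zero_mul_theta2_one_one (hτ : posDefIm t11 t12 t22) (c d : ℤ)
    (z1 z2 : ℂ) :
    theta2 1 1 c d 0 0 t11 t12 t22 * theta2 1 1 c d z1 z2 t11 t12 t22 =
      ((-1) ^ (c + d) + 1) * (theta2 1 1 0 0 z1 z2 (2 * t11) (2 * t12) (2 * t22) *
          theta2 0 0 0 0 z1 z2 (2 * t11) (2 * t12) (2 * t22)) +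
        ((-1) ^ c + (-1) ^ d) * (theta2 1 0 0 0 z1 z2 (2 * t11) (2 * t12) (2 * t22) *
          theta2 0 1 0 0 z1 z2 (2 * t11) (2 * t12) (2 * t22)) := by
  have lower (p q : ℤ) :=
    theta2_intCast_two_mul_lower z1 z2 (2 * t11) (2 * t12) (2 * t22) p q c d
  have upper (a b : ℝ) :=
    theta2_add_two_mul_upper a b (2 * c) (2 * d) z1 z2 (2 * t11) (2 * t12) (2 * t22)
  have h11 : theta2 1 1 (2 * c) (2 * d) z1 z2 (2 * t11) (2 * t12) (2 * t22) =
      (-1) ^ (c + d) * theta2 1 1 0 0 z1 z2 (2 * t11) (2 * t12) (2 * t22) := by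
    simpa using lower 1 1
  have h12 : theta2 1 2 (2 * c) (2 * d) z1 z2 (2 * t11) (2 * t12) (2 * t22) =
      (-1) ^ c * theta2 1 0 0 0 z1 z2 (2 * t11) (2 * t12) (2 * t22) := by
    simpa using (upper 1 0 0 1).trans (by simpa using lower 1 0)
  have h21 : theta2 2 1 (2 * c) (2 * d) z1 z2 (2 * t11) (2 * t12) (2 * t22) =
      (-1) ^ d * theta2 0 1 0 0 z1 z2 (2 * t11) (2 * t12) (2 * t22) := by
    simpa using (upper 0 1 1 0).trans (by simpa using lower 0 1)
  have h22 : theta2 2 2 (2 * c) (2 * d) z1 z2 (2 * t11) (2 * t12) (2 * t22) =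
      theta2 0 0 0 0 z1 z2 (2 * t11) (2 * t12) (2 * t22) := by
    simpa using (upper 0 0 1 1).trans (by simpa using lower 0 0)
  rw [theta2_zero_mul_theta2 hτ]
  simp only [Fintype.sum_prod_type, Fin.sum_univ_two, Fin.val_zero, Fin.val_one, Nat.cast_zero,
    Nat.cast_one, add_zero, one_add_one_eq_two, h11, h12, h21, h22]
  ring

end Duplication

end

/-- **Duplication (addition) theorem for second-order theta functions, cases
`[11;00]` and `[11;11]`.** With `θ̂[ε](z) = θ[ε](z|2τ)`:
`θ[11;00](0)·θ[11;00](z) = 2θ̂[11;00](z)θ̂[00;00](z) + 2θ̂[10;00](z)θ̂[01;00](z)` and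
`θ[11;11](0)·θ[11;11](z) = 2θ̂[11;00](z)θ̂[00;00](z) − 2θ̂[10;00](z)θ̂[01;00](z)`. -/
theorem theta_duplication_offdiagonal (t11 t12 t22 : ℂ) (hτ : posDefIm t11 t12 t22)
    (z1 z2 : ℂ) :
    theta2 1 1 0 0 0 0 t11 t12 t22 * theta2 1 1 0 0 z1 z2 t11 t12 t22 =
        2 * theta2 1 1 0 0 z1 z2 (2*t11) (2*t12) (2*t22)
            * theta2 0 0 0 0 z1 z2 (2*t11) (2*t12) (2*t22)
          + 2 * theta2 1 0 0 0 z1 z2 (2*t11) (2*t12) (2*t22)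
            * theta2 0 1 0 0 z1 z2 (2*t11) (2*t12) (2*t22) ∧
      theta2 1 1 1 1 0 0 t11 t12 t22 * theta2 1 1 1 1 z1 z2 t11 t12 t22 =
        2 * theta2 1 1 0 0 z1 z2 (2*t11) (2*t12) (2*t22)
            * theta2 0 0 0 0 z1 z2 (2*t11) (2*t12) (2*t22)
          - 2 * theta2 1 0 0 0 z1 z2 (2*t11) (2*t12) (2*t22)
            * theta2 0 1 0 0 z1 z2 (2*t11) (2*t12) (2*t22) := by
  constructor
  · simpa [mul_assoc, one_add_one_eq_two] using
      theta2_one_one_zero_mul_theta2_one_one hτ 0 0 z1 z2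
  · simpa [mul_assoc, one_add_one_eq_two, ← two_mul, sub_eq_add_neg] using
      theta2_one_one_zero_mul_theta2_one_one hτ 1 1 z1 z2
end

section
/- Let τ, τ̃ be complex numbers with Im τ > 0 and Im τ̃ > 0, let ε₁', ε₂', ε₁'', ε₂'' be integers, and let z ∈ ℂ². Then θ[ε₁' ε₂'; ε₁'' ε₂''](z | ((τ, 1), (1, τ̃))) = exp(−(1/2)πi·ε₁'ε₂') · θ[ε₁' ε₂'; ε₁''+ε₂', ε₂''+ε₁'](z | ((τ, 0), (0, τ̃))). -/
/-!
Replacing `τ₁₂` by `τ₁₂ + n` multiplies the summand at `m` by `exp (2πi n x y)`, where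
`x = m₁ + a/2` and `y = m₂ + b/2`. In `x y = m₁ m₂ + (b/2) x + (a/2) y - a b / 4` the integer
`m₁ m₂` contributes a trivial factor, the two linear terms shift the lower characteristic by
`n (b, a)`, and the last term gives the constant `exp (-πi n a b / 2)`. The series converges because
the imaginary part of the period matrix dominates a positive multiple of the identity, which bounds
the summands by a product of two one-variable Jacobi theta summands.
-/

/-- The summand at `m` of the series `theta2`, with the same order of arguments. -/
noncomputable def theta2Term (a b c d : ℝ) (z1 z2 t11 t12 t22 : ℂ) (m : ℤ × ℤ) : ℂ :=
  Complex.exp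
    ((Real.pi : ℂ) * Complex.I *
        (((m.1 : ℂ) + (a : ℂ) / 2) *
            (((m.1 : ℂ) + (a : ℂ) / 2) * t11 + ((m.2 : ℂ) + (b : ℂ) / 2) * t12) +
          ((m.2 : ℂ) + (b : ℂ) / 2) *
            (((m.1 : ℂ) + (a : ℂ) / 2) * t12 + ((m.2 : ℂ) + (b : ℂ) / 2) * t22)) +
      2 * (Real.pi : ℂ) * Complex.I *
        (((m.1 : ℂ) + (a : ℂ) / 2) * (z1 + (c : ℂ) / 2) +
          ((m.2 : ℂ) + (b : ℂ) / 2) * (z2 + (d : ℂ) / 2)))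

section

variable (a b c d : ℝ) (z1 z2 : ℂ)

theorem theta2Term_add_intCast (t11 t12 t22 : ℂ) (n : ℤ) (m : ℤ × ℤ) :
    theta2Term a b c d z1 z2 t11 (t12 + n) t22 m =
      Complex.exp (-(1 / 2) * (Real.pi : ℂ) * Complex.I * n * a * b) *
        theta2Term a b (c + n * b) (d + n * a) z1 z2 t11 t12 t22 m := by
  rw [theta2Term, theta2Term, ← Complex.exp_add, Complex.exp_eq_exp_iff_exists_int]
  refine ⟨n * m.1 * m.2, ?_⟩
  push_cast
  ring

theorem norm_theta2Term (t11 t12 t22 : ℂ) (m : ℤ × ℤ) :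
    ‖theta2Term a b c d z1 z2 t11 t12 t22 m‖ =
      Real.exp (-Real.pi * (t11.im * (m.1 + a / 2) ^ 2 +
          2 * t12.im * (m.1 + a / 2) * (m.2 + b / 2) + t22.im * (m.2 + b / 2) ^ 2) -
        2 * Real.pi * (z1.im * (m.1 + a / 2) + z2.im * (m.2 + b / 2))) := by
  rw [theta2Term, Complex.norm_exp]
  congr 1
  simp only [Complex.add_re, Complex.add_im, Complex.mul_re, Complex.mul_im, Complex.I_re,
    Complex.I_im, Complex.ofReal_re, Complex.ofReal_im, Complex.intCast_re, Complex.intCast_im,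
    Complex.div_ofNat_re, Complex.div_ofNat_im, Complex.re_ofNat, Complex.im_ofNat]
  ring

theorem summable_exp_neg_quadratic_s5 {l : ℝ} (hl : 0 < l) (s x : ℝ) :
    Summable fun k : ℤ ↦
      Real.exp (-Real.pi * (l * (k + x) ^ 2) - 2 * Real.pi * (s * (k + x))) := by
  have jacobi_summable :
      Summable fun k : ℤ ↦ ‖jacobiTheta₂_term k ((s + l * x : ℝ) * Complex.I) (l * Complex.I)‖ :=
    ((summable_jacobiTheta₂_term_iff _ _).2 (by simpa using hl)).norm
  refine (jacobi_summable.mul_left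
    (Real.exp (-Real.pi * (l * x ^ 2) - 2 * Real.pi * (s * x)))).congr fun k ↦ ?_
  rw [norm_jacobiTheta₂_term, ← Real.exp_add, Complex.im_ofReal_mul, Complex.im_ofReal_mul,
    Complex.I_im]
  congr 1
  ring

theorem posDefIm_diagonal {t11 t22 : ℂ} (h11 : 0 < t11.im) (h22 : 0 < t22.im) :
    posDefIm t11 0 t22 := by
  have diagonal_posDef : (Matrix.diagonal ![t11.im, t22.im]).PosDef :=
    Matrix.posDef_diagonal_iff.2 (Fin.forall_fin_two.2 ⟨h11, h22⟩)
  simpa [posDefIm, Matrix.diagonal_fin_two] using diagonal_posDef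

variable {t11 t12 t22 : ℂ}

theorem exists_pos_mul_sq_add_sq_le_of_posDefIm (h : posDefIm t11 t12 t22) :
    ∃ l : ℝ, 0 < l ∧ ∀ x y : ℝ,
      l * (x ^ 2 + y ^ 2) ≤ t11.im * x ^ 2 + 2 * t12.im * x * y + t22.im * y ^ 2 := by
  have h11 : 0 < t11.im := h.diag_pos (i := 0)
  have h22 : 0 < t22.im := h.diag_pos (i := 1)
  have hdet : 0 < t11.im * t22.im - t12.im * t12.im := by
    simpa only [Matrix.det_fin_two_of] using h.det_pos
  have htrace : 0 < t11.im + t22.im := add_pos h11 h22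
  -- The determinant over the trace is below the smaller eigenvalue.
  refine ⟨(t11.im * t22.im - t12.im * t12.im) / (t11.im + t22.im), by positivity, fun x y ↦ ?_⟩
  rw [div_mul_eq_mul_div, div_le_iff₀ htrace]
  linarith [sq_nonneg (t11.im * x + t12.im * y), sq_nonneg (t12.im * x + t22.im * y)]

theorem summable_theta2Term (h : posDefIm t11 t12 t22) :
    Summable (theta2Term a b c d z1 z2 t11 t12 t22) := by
  obtain ⟨l, hl, hbound⟩ := exists_pos_mul_sq_add_sq_le_of_posDefIm h
  have majorant_summable := (summable_exp_neg_quadratic_s5 hl z1.im (a / 2)).mul_of_nonneg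
    (summable_exp_neg_quadratic_s5 hl z2.im (b / 2))
    (fun _ ↦ (Real.exp_pos _).le) (fun _ ↦ (Real.exp_pos _).le)
  refine majorant_summable.of_norm_bounded fun m ↦ ?_
  rw [norm_theta2Term, ← Real.exp_add, Real.exp_le_exp]
  linarith [mul_le_mul_of_nonneg_left (hbound (m.1 + a / 2) (m.2 + b / 2)) Real.pi_pos.le]

theorem theta_offdiagonal_one_reduction_general (h : posDefIm t11 t12 t22) (n : ℤ) :
    Summable (theta2Term a b c d z1 z2 t11 (t12 + n) t22) ∧
      theta2 a b c d z1 z2 t11 (t12 + n) t22 =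
        Complex.exp (-(1 / 2) * (Real.pi : ℂ) * Complex.I * n * a * b) *
          theta2 a b (c + n * b) (d + n * a) z1 z2 t11 t12 t22 := by
  have shifted_hasSum : HasSum (theta2Term a b c d z1 z2 t11 (t12 + n) t22)
      (Complex.exp (-(1 / 2) * (Real.pi : ℂ) * Complex.I * n * a * b) *
        theta2 a b (c + n * b) (d + n * a) z1 z2 t11 t12 t22) :=
    ((summable_theta2Term a b _ _ z1 z2 h).hasSum.mul_left _).congr_fun fun m ↦
      theta2Term_add_intCast a b c d z1 z2 t11 t12 t22 n m
  exact ⟨shifted_hasSum.summable, shifted_hasSum.tsum_eq⟩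

end

/-- **Reduction of the off-diagonal period `τ₁₂ = 1` to a diagonal period matrix.**
For integer characteristics,
`θ[ε₁' ε₂'; ε₁'' ε₂''](z | ((τ,1),(1,τ̃))) = e^{−πi ε₁'ε₂'/2} ·
θ[ε₁' ε₂'; ε₁''+ε₂', ε₂''+ε₁'](z | ((τ,0),(0,τ̃)))`. -/
theorem theta_offdiagonal_one_reduction
    (τ τ' : ℂ) (hτ : 0 < τ.im) (hτ' : 0 < τ'.im)
    (e1 e2 f1 f2 : ℤ) (z1 z2 : ℂ) :
    theta2 (e1 : ℝ) (e2 : ℝ) (f1 : ℝ) (f2 : ℝ) z1 z2 τ 1 τ' =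
      Complex.exp (-(1/2) * (Real.pi : ℂ) * Complex.I * (e1 : ℂ) * (e2 : ℂ)) *
        theta2 (e1 : ℝ) (e2 : ℝ) ((f1 : ℝ) + (e2 : ℝ)) ((f2 : ℝ) + (e1 : ℝ))
          z1 z2 τ 0 τ' := by
  simpa using (theta_offdiagonal_one_reduction_general e1 e2 f1 f2 z1 z2
    (posDefIm_diagonal hτ hτ') 1).2
end

section
/- Let τ be a symmetric 2×2 complex matrix with positive definite imaginary part and write θ[ε] for the genus-2 theta constant θ[ε](0|τ). Then the following relations between fourth powers of even theta constants hold: θ⁴[00;00] − θ⁴[00;11] = θ⁴[10;01] + θ⁴[01;00] = θ⁴[10;00] + θ⁴[01;10]; θ⁴[00;00] − θ⁴[11;00] = θ⁴[01;10] + θ⁴[00;01] = θ⁴[00;10] + θ⁴[10;01]; θ⁴[00;00] − θ⁴[11;11] = θ⁴[10;00] + θ⁴[00;10] = θ⁴[01;00] + θ⁴[00;01]. -/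
/-!
The parallelogram law `τ[x + y] + τ[x - y] = (2τ)[x] + (2τ)[y]` turns a product of two theta series
into a sum over `s ∈ 𝔽₂ᵍ` of products of theta series for `2τ`, where `s` is the parity of
`m + n` for the summation indices `m`, `n`. For `Θ s = θ[s; 0](0|2τ)` it gives
`θ[a; c]² = ∑ s, (-1)^(c·(s+a)) Θ (s+a) Θ s`, and squaring once more
`θ[a; c]⁴ = ∑ b, (-1)^(c·b) Q a b` with `Q a b = ∑ s, Θ s Θ (s+a) Θ (s+b) Θ (s+a+b)`.

Since `Q a b = Q b a = Q a (a+b)`, in genus two `Q` takes only five values: `Q 0 a`, for the four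
`a ∈ 𝔽₂²`, and a common value `R` for all pairs of distinct nonzero `a`, `b`. In terms of these the
relations are linear identities.
-/

open scoped Matrix Real

section Summability

variable {ι : Type*} [Fintype ι]

theorem summable_prod_pi_of_nonneg {κ : ι → Type*} {f : ∀ i, κ i → ℝ}
    (hf_nonneg : ∀ i k, 0 ≤ f i k) (hf : ∀ i, Summable (f i)) :
    Summable fun m : ∀ i, κ i ↦ ∏ i, f i (m i) := by
  classical
  refine summable_of_sum_le (c := ∏ i, ∑' k, f i k)
    (fun m ↦ Finset.prod_nonneg fun i _ ↦ hf_nonneg i _) fun u ↦ ?_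
  let box := Fintype.piFinset fun i ↦ u.image fun m ↦ m i
  have subset_box : u ⊆ box := fun m hm ↦
    Fintype.mem_piFinset.2 fun i ↦ Finset.mem_image_of_mem (fun m ↦ m i) hm
  calc ∑ m ∈ u, ∏ i, f i (m i)
      ≤ ∑ m ∈ box, ∏ i, f i (m i) := Finset.sum_le_sum_of_subset_of_nonneg subset_box
        fun m _ _ ↦ Finset.prod_nonneg fun i _ ↦ hf_nonneg i _
    _ = ∏ i, ∑ k ∈ u.image fun m ↦ m i, f i k := (Finset.prod_univ_sum _ _).symm
    _ ≤ ∏ i, ∑' k, f i k := Finset.prod_le_prod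
        (fun i _ ↦ Finset.sum_nonneg fun k _ ↦ hf_nonneg i k)
        fun i _ ↦ (hf i).sum_le_tsum _ fun k _ ↦ hf_nonneg i k

theorem summable_exp_neg_quadratic_int_add {r : ℝ} (hr : 0 < r) (x₀ v : ℝ) :
    Summable fun n : ℤ ↦ Real.exp (-π * (r * (n + x₀) ^ 2) - 2 * π * ((n + x₀) * v)) := by
  have jacobi_summable := ((summable_jacobiTheta₂_term_iff (Complex.I * (r * x₀ + v : ℝ))
    (Complex.I * r)).2 (by simpa using hr)).norm
  refine (jacobi_summable.mul_left
    (Real.exp (-π * (r * x₀ ^ 2) - 2 * π * (x₀ * v)))).congr fun n ↦ ?_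
  rw [norm_jacobiTheta₂_term, ← Real.exp_add]
  simp only [Complex.I_mul_im, Complex.ofReal_re]
  ring_nf

open scoped MatrixOrder in
theorem exists_pos_mul_dotProduct_self_le {Y : Matrix ι ι ℝ} (hY : Y.PosDef) :
    ∃ r > 0, ∀ x : ι → ℝ, r * (x ⬝ᵥ x) ≤ x ⬝ᵥ Y *ᵥ x := by
  classical
  obtain ⟨r, r_pos, hr⟩ := Pi.exists_forall_pos_add_lt hY.eigenvalues_pos
  have smul_one_le : algebraMap ℝ (Matrix ι ι ℝ) r ≤ Y := by
    rw [algebraMap_le_iff_le_spectrum, hY.1.spectrum_real_eq_range_eigenvalues]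
    rintro _ ⟨i, rfl⟩
    simpa using (hr i).le
  refine ⟨r, r_pos, fun x ↦ ?_⟩
  simpa [Matrix.sub_mulVec, Algebra.algebraMap_eq_smul_one, Matrix.smul_mulVec] using
    (Matrix.le_iff.1 smul_one_le).dotProduct_mulVec_nonneg x

end Summability

section ThetaTerm

variable {ι : Type*} [Fintype ι]

/-- The general term `exp (πi⟨x, τx⟩ + 2πi⟨x, w⟩)` of a theta series, as a function of the real
vector `x` which runs through a translate of the lattice `ℤᵍ`. -/
noncomputable def thetaTerm (τ : Matrix ι ι ℂ) (w : ι → ℂ) (x : ι → ℝ) : ℂ :=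
  Complex.exp (π * Complex.I * ((fun i ↦ (x i : ℂ)) ⬝ᵥ τ *ᵥ fun i ↦ (x i : ℂ)) +
    2 * π * Complex.I * ((fun i ↦ (x i : ℂ)) ⬝ᵥ w))

theorem thetaTerm_add_mul_thetaTerm_sub (τ : Matrix ι ι ℂ) (w w' : ι → ℂ) (x y : ι → ℝ) :
    thetaTerm τ w (x + y) * thetaTerm τ w' (x - y) =
      thetaTerm ((2 : ℂ) • τ) (w + w') x * thetaTerm ((2 : ℂ) • τ) (w - w') y := by
  have cast_add : (fun i ↦ ((x + y) i : ℂ)) = (fun i ↦ (x i : ℂ)) + fun i ↦ (y i : ℂ) := by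
    ext i; simp
  have cast_sub : (fun i ↦ ((x - y) i : ℂ)) = (fun i ↦ (x i : ℂ)) - fun i ↦ (y i : ℂ) := by
    ext i; simp
  simp only [thetaTerm, ← Complex.exp_add, cast_add, cast_sub, Matrix.mulVec_add,
    Matrix.mulVec_sub, Matrix.smul_mulVec, dotProduct_add, dotProduct_sub, add_dotProduct,
    sub_dotProduct, dotProduct_smul, smul_eq_mul]
  congr 1
  ring

theorem thetaTerm_add_intCast (τ : Matrix ι ι ℂ) (w : ι → ℂ) (x₀ : ι → ℝ) (m n : ι → ℤ) :
    thetaTerm τ (fun i ↦ w i + n i) (fun i ↦ m i + x₀ i) =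
      Complex.exp (2 * π * Complex.I * ∑ i, (x₀ i : ℂ) * n i) *
        thetaTerm τ w fun i ↦ m i + x₀ i := by
  have pairing_add : (fun i ↦ ((m i + x₀ i : ℝ) : ℂ)) ⬝ᵥ (fun i ↦ w i + n i) =
      ((fun i ↦ ((m i + x₀ i : ℝ) : ℂ)) ⬝ᵥ w + ∑ i, (x₀ i : ℂ) * n i) + (m ⬝ᵥ n : ℤ) := by
    simp only [dotProduct, Complex.ofReal_add, Complex.ofReal_intCast, Int.cast_sum, Int.cast_mul,
      ← Finset.sum_add_distrib]
    exact Finset.sum_congr rfl fun i _ ↦ by ring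
  rw [thetaTerm, pairing_add, thetaTerm, ← Complex.exp_add, ← mul_one (Complex.exp (_ + (_ + _))),
    ← Complex.exp_int_mul_two_pi_mul_I (m ⬝ᵥ n), ← Complex.exp_add]
  congr 1
  ring

theorem norm_thetaTerm (τ : Matrix ι ι ℂ) (w : ι → ℂ) (x : ι → ℝ) :
    ‖thetaTerm τ w x‖ =
      Real.exp (-π * (x ⬝ᵥ τ.map Complex.im *ᵥ x) - 2 * π * (x ⬝ᵥ fun i ↦ (w i).im)) := by
  simp [thetaTerm, Complex.norm_exp, dotProduct, Matrix.mulVec, Finset.mul_sum, sub_eq_add_neg]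

theorem summable_norm_thetaTerm {τ : Matrix ι ι ℂ} (hτ : (τ.map Complex.im).PosDef)
    (w : ι → ℂ) (x₀ : ι → ℝ) :
    Summable fun m : ι → ℤ ↦ ‖thetaTerm τ w fun i ↦ m i + x₀ i‖ := by
  obtain ⟨r, r_pos, hr⟩ := exists_pos_mul_dotProduct_self_le hτ
  refine .of_nonneg_of_le (fun _ ↦ norm_nonneg _) (fun m ↦ ?_)
    (summable_prod_pi_of_nonneg (fun _ _ ↦ (Real.exp_pos _).le)
      fun i ↦ summable_exp_neg_quadratic_int_add r_pos (x₀ i) (w i).im)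
  have form_bound := mul_le_mul_of_nonneg_left (hr fun i ↦ m i + x₀ i) Real.pi_pos.le
  rw [norm_thetaTerm, ← Real.exp_sum, Real.exp_le_exp, Finset.sum_sub_distrib, ← Finset.mul_sum,
    ← Finset.mul_sum, ← Finset.mul_sum]
  simp only [dotProduct, ← sq] at form_bound ⊢
  linarith

end ThetaTerm

section AdditionFormula

/-- Pairs `(m, n)` of integer vectors correspond to triples `(s, p, q)` through `m = p + q + s`,
`n = p - q`, where `s` is the parity of `m + n`, represented in `{0, 1}`. -/
def sumDiffEquiv (ι : Type*) :
    (ι → ZMod 2) × (ι → ℤ) × (ι → ℤ) ≃ (ι → ℤ) × (ι → ℤ) where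
  toFun u := (fun i ↦ u.2.1 i + u.2.2 i + (u.1 i).val, fun i ↦ u.2.1 i - u.2.2 i)
  invFun v := (fun i ↦ ((v.1 i + v.2 i : ℤ) : ZMod 2), fun i ↦ (v.1 i + v.2 i) / 2,
    fun i ↦ (v.1 i - v.2 i) / 2)
  left_inv := by
    rintro ⟨s, p, q⟩
    have val_lt (i : ι) : (s i).val < 2 := ZMod.val_lt _
    have sum_eq (i : ι) : p i + q i + (s i).val + (p i - q i) = 2 * p i + (s i).val := by ring
    simp only [Prod.mk.injEq, sum_eq]
    refine ⟨funext fun i ↦ ?_, funext fun i ↦ ?_, funext fun i ↦ ?_⟩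
    · simp [CharTwo.two_eq_zero]
    · grind
    · grind
  right_inv := by
    rintro ⟨m, n⟩
    simp only [Prod.mk.injEq, ZMod.val_intCast]
    exact ⟨funext fun i ↦ by omega, funext fun i ↦ by omega⟩

theorem posDef_map_im_two_smul {ι : Type*} {τ : Matrix ι ι ℂ}
    (hτ : (τ.map Complex.im).PosDef) : (((2 : ℂ) • τ).map Complex.im).PosDef := by
  have map_im_smul : ((2 : ℂ) • τ).map Complex.im = (2 : ℝ) • τ.map Complex.im := by
    ext i j; simp
  exact map_im_smul ▸ hτ.smul two_pos

variable {ι : Type*} [Fintype ι]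

/-- The Riemann theta function `θ[a; c](z|τ)` with characteristics, in arbitrary genus `#ι`. -/
noncomputable def riemannTheta (a c : ι → ℝ) (z : ι → ℂ) (τ : Matrix ι ι ℂ) : ℂ :=
  ∑' m : ι → ℤ, thetaTerm τ (fun i ↦ z i + c i / 2) fun i ↦ m i + a i / 2

theorem thetaTerm_mul_thetaTerm_sumDiffEquiv (τ : Matrix ι ι ℂ) (a b c d : ι → ℝ) (z w : ι → ℂ)
    (s : ι → ZMod 2) (p q : ι → ℤ) :
    thetaTerm τ (fun i ↦ z i + c i / 2) (fun i ↦ (sumDiffEquiv ι (s, p, q)).1 i + a i / 2) *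
        thetaTerm τ (fun i ↦ w i + d i / 2) (fun i ↦ (sumDiffEquiv ι (s, p, q)).2 i + b i / 2) =
      thetaTerm ((2 : ℂ) • τ) (fun i ↦ (z + w) i + ((c + d) i : ℝ) / 2)
          (fun i ↦ p i + ((s i).val + (a i + b i) / 2) / 2) *
        thetaTerm ((2 : ℂ) • τ) (fun i ↦ (z - w) i + ((c - d) i : ℝ) / 2)
          (fun i ↦ q i + ((s i).val + (a i - b i) / 2) / 2) := by
  have parallelogram := thetaTerm_add_mul_thetaTerm_sub τ
    (fun i ↦ z i + c i / 2) (fun i ↦ w i + d i / 2)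
    (fun i ↦ p i + ((s i).val + (a i + b i) / 2) / 2)
    (fun i ↦ q i + ((s i).val + (a i - b i) / 2) / 2)
  convert parallelogram using 3 <;> ext i <;>
    simp only [sumDiffEquiv, Equiv.coe_fn_mk, Pi.add_apply, Pi.sub_apply] <;> push_cast <;> ring

theorem riemannTheta_mul_riemannTheta [DecidableEq ι] {τ : Matrix ι ι ℂ}
    (hτ : (τ.map Complex.im).PosDef) (a b c d : ι → ℝ) (z w : ι → ℂ) :
    riemannTheta a c z τ * riemannTheta b d w τ = ∑ s : ι → ZMod 2,
      riemannTheta (fun i ↦ (s i).val + (a i + b i) / 2) (c + d) (z + w) ((2 : ℂ) • τ) *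
        riemannTheta (fun i ↦ (s i).val + (a i - b i) / 2) (c - d) (z - w) ((2 : ℂ) • τ) := by
  have hτ₂ := posDef_map_im_two_smul hτ
  have summable_mul := summable_mul_of_summable_norm
    (summable_norm_thetaTerm hτ (fun i ↦ z i + c i / 2) fun i ↦ a i / 2)
    (summable_norm_thetaTerm hτ (fun i ↦ w i + d i / 2) fun i ↦ b i / 2)
  simp only [riemannTheta]
  rw [tsum_mul_tsum_of_summable_norm (summable_norm_thetaTerm hτ _ _)
      (summable_norm_thetaTerm hτ _ _), ← (sumDiffEquiv ι).tsum_eq]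
  refine (Summable.tsum_prod ((sumDiffEquiv ι).summable_iff.2 summable_mul)).trans ?_
  rw [tsum_fintype]
  refine Finset.sum_congr rfl fun s _ ↦ ?_
  rw [tsum_mul_tsum_of_summable_norm (summable_norm_thetaTerm hτ₂ _ _)
      (summable_norm_thetaTerm hτ₂ _ _)]
  exact tsum_congr fun u ↦ thetaTerm_mul_thetaTerm_sumDiffEquiv τ a b c d z w s u.1 u.2

theorem riemannTheta_add_two_mul_int_left (a c : ι → ℝ) (n : ι → ℤ) (z : ι → ℂ)
    (τ : Matrix ι ι ℂ) :
    riemannTheta (fun i ↦ a i + 2 * n i) c z τ = riemannTheta a c z τ := by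
  simp only [riemannTheta]
  rw [← (Equiv.addRight n).tsum_eq fun m : ι → ℤ ↦
    thetaTerm τ (fun i ↦ z i + c i / 2) fun i ↦ m i + a i / 2]
  refine tsum_congr fun m ↦ congrArg _ (funext fun i ↦ ?_)
  simp only [Equiv.coe_addRight, Pi.add_apply, Int.cast_add]
  ring

theorem riemannTheta_add_two_mul_int_right (a c : ι → ℝ) (n : ι → ℤ) (z : ι → ℂ)
    (τ : Matrix ι ι ℂ) :
    riemannTheta a (fun i ↦ c i + 2 * n i) z τ =
      Complex.exp (π * Complex.I * ∑ i, (a i : ℂ) * n i) * riemannTheta a c z τ := by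
  have shift : (fun i ↦ z i + ((c i + 2 * n i : ℝ) : ℂ) / 2) =
      fun i ↦ (z i + c i / 2) + n i := by
    ext i; push_cast; ring
  have phase : (π * Complex.I * ∑ i, (a i : ℂ) * n i : ℂ) =
      2 * π * Complex.I * ∑ i, ((a i / 2 : ℝ) : ℂ) * n i := by
    simp only [Finset.mul_sum]
    exact Finset.sum_congr rfl fun i _ ↦ by push_cast; ring
  simp only [riemannTheta, shift, phase, thetaTerm_add_intCast, tsum_mul_left]

end AdditionFormula

section QuarticCorrelation

variable {V R : Type*} [AddCommGroup V] [Fintype V] [CommSemiring R]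

/-- The correlation of a function over the parallelograms `s, s + a, s + b, s + a + b`. -/
def quarticCorrelation (f : V → R) (a b : V) : R :=
  ∑ s, f s * f (s + a) * f (s + b) * f (s + a + b)

theorem quarticCorrelation_comm (f : V → R) (a b : V) :
    quarticCorrelation f a b = quarticCorrelation f b a :=
  Finset.sum_congr rfl fun s _ ↦ by rw [add_right_comm s b a]; ring

variable [Module (ZMod 2) V]

theorem quarticCorrelation_add_right (f : V → R) (a b : V) :
    quarticCorrelation f a (a + b) = quarticCorrelation f a b :=
  Finset.sum_congr rfl fun s _ ↦ by
    rw [ZModModule.add_add_add_cancel, ← add_assoc]; ring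

theorem quarticCorrelation_self (f : V → R) (a : V) :
    quarticCorrelation f a a = quarticCorrelation f 0 a := by
  rw [quarticCorrelation_comm f 0 a, ← quarticCorrelation_add_right f a 0, add_zero]

theorem quarticCorrelation_add_left (f : V → R) (a b : V) :
    quarticCorrelation f (a + b) a = quarticCorrelation f a b := by
  rw [quarticCorrelation_comm, quarticCorrelation_add_right]

theorem sq_sum_addChar_mul (ψ : AddChar V R) (f : V → R) (a : V) :
    (∑ s, ψ (s + a) * (f (s + a) * f s)) ^ 2 = ∑ b, ψ b * quarticCorrelation f a b := by
  have ψ_mul (s b : V) : ψ (s + a) * ψ (s + b + a) = ψ b := by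
    rw [← AddChar.map_add_eq_mul, add_comm s a, add_assoc s b a, ZModModule.add_add_add_cancel,
      add_left_comm, ZModModule.add_self, add_zero]
  calc (∑ s, ψ (s + a) * (f (s + a) * f s)) ^ 2
      = ∑ s, ∑ b, ψ (s + a) * (f (s + a) * f s) *
          (ψ (s + b + a) * (f (s + b + a) * f (s + b))) := by
        rw [sq, Finset.sum_mul_sum]
        exact Finset.sum_congr rfl fun s _ ↦ (Equiv.sum_comp (Equiv.addLeft s) _).symm
    _ = ∑ b, ∑ s, ψ b * (f s * f (s + a) * f (s + b) * f (s + a + b)) := by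
        rw [Finset.sum_comm]
        refine Finset.sum_congr rfl fun b _ ↦ Finset.sum_congr rfl fun s _ ↦ ?_
        rw [← ψ_mul s b, add_right_comm s b a]
        ring
    _ = ∑ b, ψ b * quarticCorrelation f a b := by simp only [quarticCorrelation, Finset.mul_sum]

end QuarticCorrelation

section BinaryCharacteristics

/-- The real characteristic with entries `0` and `1` given by a vector over `𝔽₂`. -/
def binaryChar {ι : Type*} (s : ι → ZMod 2) : ι → ℝ := fun i ↦ (s i).val

variable {ι : Type*} [Fintype ι]

/-- The second order theta constant `Θ s = θ[s; 0](0|2τ)`. -/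
noncomputable def secondOrderThetaConst (τ : Matrix ι ι ℂ) (s : ι → ZMod 2) : ℂ :=
  riemannTheta (binaryChar s) 0 0 ((2 : ℂ) • τ)

theorem riemannTheta_binaryChar_add (s a : ι → ZMod 2) (c : ι → ℝ) (z : ι → ℂ)
    (τ : Matrix ι ι ℂ) :
    riemannTheta (binaryChar s + binaryChar a) c z τ = riemannTheta (binaryChar (s + a)) c z τ := by
  have carry : binaryChar s + binaryChar a =
      fun i ↦ binaryChar (s + a) i + 2 * ((((s i).val + (a i).val) / 2 : ℕ) : ℤ) := by
    ext i
    have := Nat.mod_add_div ((s i).val + (a i).val) 2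
    simp only [binaryChar, Pi.add_apply, ZMod.val_add, Int.cast_natCast]
    exact_mod_cast this.symm
  rw [carry, riemannTheta_add_two_mul_int_left]

theorem riemannTheta_binaryChar_add_self (s c : ι → ZMod 2) (z : ι → ℂ) (τ : Matrix ι ι ℂ) :
    riemannTheta (binaryChar s) (binaryChar c + binaryChar c) z τ =
      ZMod.stdAddChar (c ⬝ᵥ s) * riemannTheta (binaryChar s) 0 z τ := by
  have dotProduct_eq_cast : c ⬝ᵥ s = ((∑ i, (s i).val * (c i).val : ℤ) : ZMod 2) := by
    simp [dotProduct, mul_comm]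
  have double : binaryChar c + binaryChar c = fun i ↦ (0 : ι → ℝ) i + 2 * ((c i).val : ℤ) := by
    ext i
    simp only [binaryChar, Pi.add_apply, Pi.zero_apply, Int.cast_natCast]
    ring
  rw [double, riemannTheta_add_two_mul_int_right, dotProduct_eq_cast, ZMod.stdAddChar_coe]
  congr 2
  simp only [binaryChar]
  push_cast
  ring

theorem riemannTheta_binaryChar_sq [DecidableEq ι] {τ : Matrix ι ι ℂ}
    (hτ : (τ.map Complex.im).PosDef) (a c : ι → ZMod 2) :
    riemannTheta (binaryChar a) (binaryChar c) 0 τ ^ 2 =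
      ∑ s, ZMod.stdAddChar (c ⬝ᵥ (s + a)) *
        (secondOrderThetaConst τ (s + a) * secondOrderThetaConst τ s) := by
  rw [sq, riemannTheta_mul_riemannTheta hτ]
  refine Finset.sum_congr rfl fun s _ ↦ ?_
  have fst_char : (fun i ↦ ((s i).val : ℝ) + (binaryChar a i + binaryChar a i) / 2) =
      binaryChar s + binaryChar a := by
    ext i; simp [binaryChar]
  have snd_char : (fun i ↦ ((s i).val : ℝ) + (binaryChar a i - binaryChar a i) / 2) =
      binaryChar s := by
    ext i; simp [binaryChar]
  rw [fst_char, snd_char, sub_self, sub_self, add_zero, riemannTheta_binaryChar_add,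
    riemannTheta_binaryChar_add_self, mul_assoc, secondOrderThetaConst, secondOrderThetaConst]

theorem riemannTheta_binaryChar_pow_four [DecidableEq ι] {τ : Matrix ι ι ℂ}
    (hτ : (τ.map Complex.im).PosDef) (a c : ι → ZMod 2) :
    riemannTheta (binaryChar a) (binaryChar c) 0 τ ^ 4 =
      ∑ b, ZMod.stdAddChar (c ⬝ᵥ b) * quarticCorrelation (secondOrderThetaConst τ) a b := by
  rw [pow_mul _ 2 2, riemannTheta_binaryChar_sq hτ]
  exact sq_sum_addChar_mul (ZMod.stdAddChar.compAddMonoidHom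
    (AddMonoidHom.mk' (c ⬝ᵥ ·) (dotProduct_add c))) (secondOrderThetaConst τ) a

end BinaryCharacteristics

section GenusTwo

theorem theta2_eq_riemannTheta (a b c d : ℝ) (z1 z2 t11 t12 t22 : ℂ) :
    theta2 a b c d z1 z2 t11 t12 t22 =
      riemannTheta ![a, b] ![c, d] ![z1, z2] !![t11, t12; t12, t22] := by
  rw [theta2, riemannTheta, ← (finTwoArrowEquiv ℤ).tsum_eq]
  refine tsum_congr fun m ↦ ?_
  simp [thetaTerm, dotProduct, Matrix.mulVec, Fin.sum_univ_two, finTwoArrowEquiv, mul_comm]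

theorem posDefIm.posDef_map_im {t11 t12 t22 : ℂ} (hτ : posDefIm t11 t12 t22) :
    (!![t11, t12; t12, t22].map Complex.im).PosDef := by
  have map_im : !![t11, t12; t12, t22].map Complex.im =
      !![t11.im, t12.im; t12.im, t22.im] := by
    ext i j; fin_cases i <;> fin_cases j <;> rfl
  exact map_im ▸ hτ

theorem stdAddChar_zmod_two (x : ZMod 2) : ZMod.stdAddChar x = (-1 : ℂ) ^ x.val := by
  have cast_val : x = ((x.val : ℤ) : ZMod 2) := by simp
  rw [← Complex.exp_pi_mul_I, ← Complex.exp_nat_mul]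
  conv_lhs => rw [cast_val, ZMod.stdAddChar_coe]
  congr 1
  push_cast
  ring

local notation "e₁" => (![1, 0] : Fin 2 → ZMod 2)
local notation "e₂" => (![0, 1] : Fin 2 → ZMod 2)

theorem sum_fin_two_arrow_zmod_two {M : Type*} [AddCommMonoid M] (g : (Fin 2 → ZMod 2) → M) :
    ∑ b, g b = g 0 + g e₁ + g e₂ + g (e₁ + e₂) := by
  have univ_eq : (Finset.univ : Finset (Fin 2 → ZMod 2)) = {0, e₁, e₂, e₁ + e₂} := by decide
  rw [univ_eq, Finset.sum_insert (by decide), Finset.sum_insert (by decide),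
    Finset.sum_pair (by decide), add_assoc, add_assoc]

/-- The coefficients `Q a b` in `θ[a; c]⁴ = ∑ b, (-1)^(c·b) Q a b`, for genus two. -/
noncomputable def thetaQuartic (t11 t12 t22 : ℂ) : (Fin 2 → ZMod 2) → (Fin 2 → ZMod 2) → ℂ :=
  quarticCorrelation (secondOrderThetaConst !![t11, t12; t12, t22])

variable {t11 t12 t22 : ℂ}

theorem theta2_pow_four (hτ : posDefIm t11 t12 t22) (a b c d : ZMod 2) :
    theta2 a.val b.val c.val d.val 0 0 t11 t12 t22 ^ 4 =
      thetaQuartic t11 t12 t22 ![a, b] 0 + (-1) ^ c.val * thetaQuartic t11 t12 t22 ![a, b] e₁ +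
        (-1) ^ d.val * thetaQuartic t11 t12 t22 ![a, b] e₂ +
        (-1) ^ c.val * (-1) ^ d.val * thetaQuartic t11 t12 t22 ![a, b] (e₁ + e₂) := by
  have binaryChar_pair (x y : ZMod 2) : ![(x.val : ℝ), (y.val : ℝ)] = binaryChar ![x, y] := by
    ext i; fin_cases i <;> rfl
  have zero_pair : ![(0 : ℂ), 0] = 0 := by simp
  have dotProduct_e₁ : ![c, d] ⬝ᵥ e₁ = c := by simp
  have dotProduct_e₂ : ![c, d] ⬝ᵥ e₂ = d := by simp
  rw [theta2_eq_riemannTheta, binaryChar_pair, binaryChar_pair, zero_pair,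
    riemannTheta_binaryChar_pow_four hτ.posDef_map_im, sum_fin_two_arrow_zmod_two,
    dotProduct_zero, dotProduct_add, dotProduct_e₁, dotProduct_e₂, AddChar.map_add_eq_mul,
    AddChar.map_zero_eq_one, one_mul, stdAddChar_zmod_two, stdAddChar_zmod_two, thetaQuartic]

theorem theta2_zero_zero_pow_four (hτ : posDefIm t11 t12 t22) (c d : ZMod 2) :
    theta2 0 0 c.val d.val 0 0 t11 t12 t22 ^ 4 =
      thetaQuartic t11 t12 t22 0 0 + (-1) ^ c.val * thetaQuartic t11 t12 t22 0 e₁ +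
        (-1) ^ d.val * thetaQuartic t11 t12 t22 0 e₂ +
        (-1) ^ c.val * (-1) ^ d.val * thetaQuartic t11 t12 t22 0 (e₁ + e₂) := by
  have zero_pair : ![(0 : ZMod 2), 0] = 0 := by decide
  simpa only [ZMod.val_zero, Nat.cast_zero, zero_pair] using theta2_pow_four hτ 0 0 c d

theorem theta2_one_zero_pow_four (hτ : posDefIm t11 t12 t22) (d : ZMod 2) :
    theta2 1 0 0 d.val 0 0 t11 t12 t22 ^ 4 =
      2 * thetaQuartic t11 t12 t22 0 e₁ + (-1) ^ d.val * (2 * thetaQuartic t11 t12 t22 e₁ e₂) := by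
  have expansion := theta2_pow_four hτ 1 0 0 d
  simp only [thetaQuartic, quarticCorrelation_comm _ e₁ 0, quarticCorrelation_self,
    quarticCorrelation_add_right, ZMod.val_zero, ZMod.val_one, Nat.cast_zero, Nat.cast_one,
    pow_zero] at expansion ⊢
  linear_combination expansion

theorem theta2_zero_one_pow_four (hτ : posDefIm t11 t12 t22) (c : ZMod 2) :
    theta2 0 1 c.val 0 0 0 t11 t12 t22 ^ 4 =
      2 * thetaQuartic t11 t12 t22 0 e₂ + (-1) ^ c.val * (2 * thetaQuartic t11 t12 t22 e₁ e₂) := by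
  have expansion := theta2_pow_four hτ 0 1 c 0
  simp only [thetaQuartic, quarticCorrelation_comm _ e₂ 0, quarticCorrelation_comm _ e₂ e₁,
    add_comm e₁ e₂, quarticCorrelation_self, quarticCorrelation_add_right, ZMod.val_zero,
    ZMod.val_one, Nat.cast_zero, Nat.cast_one, pow_zero] at expansion ⊢
  linear_combination expansion

theorem theta2_one_one_pow_four (hτ : posDefIm t11 t12 t22) (c : ZMod 2) :
    theta2 1 1 c.val c.val 0 0 t11 t12 t22 ^ 4 =
      2 * thetaQuartic t11 t12 t22 0 (e₁ + e₂) +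
        (-1) ^ c.val * (2 * thetaQuartic t11 t12 t22 e₁ e₂) := by
  have one_pair : ![(1 : ZMod 2), 1] = e₁ + e₂ := by decide
  have quartic_e₂ : quarticCorrelation (secondOrderThetaConst !![t11, t12; t12, t22]) (e₁ + e₂) e₂ =
      quarticCorrelation (secondOrderThetaConst !![t11, t12; t12, t22]) e₁ e₂ := by
    rw [add_comm, quarticCorrelation_add_left, quarticCorrelation_comm]
  have sign_sq : ((-1 : ℂ) ^ c.val) * (-1) ^ c.val = 1 := by
    rw [← mul_pow, neg_one_mul, neg_neg, one_pow]
  have expansion := theta2_pow_four hτ 1 1 c c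
  simp only [one_pair, thetaQuartic, quarticCorrelation_comm _ (e₁ + e₂) 0, quartic_e₂, sign_sq,
    quarticCorrelation_self, quarticCorrelation_add_left, ZMod.val_one, Nat.cast_one]
    at expansion ⊢
  linear_combination expansion

end GenusTwo

/-- **Relations between fourth powers of even genus-2 theta constants.**
Writing `θ[ε] = θ[ε](0|τ)`:
`θ⁴[00;00] − θ⁴[00;11] = θ⁴[10;01] + θ⁴[01;00] = θ⁴[10;00] + θ⁴[01;10]`;
`θ⁴[00;00] − θ⁴[11;00] = θ⁴[01;10] + θ⁴[00;01] = θ⁴[00;10] + θ⁴[10;01]`;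
`θ⁴[00;00] − θ⁴[11;11] = θ⁴[10;00] + θ⁴[00;10] = θ⁴[01;00] + θ⁴[00;01]`. -/
theorem theta_constants_fourth_powers (t11 t12 t22 : ℂ) (hτ : posDefIm t11 t12 t22) :
    (theta2 0 0 0 0 0 0 t11 t12 t22 ^ 4 - theta2 0 0 1 1 0 0 t11 t12 t22 ^ 4 =
        theta2 1 0 0 1 0 0 t11 t12 t22 ^ 4 + theta2 0 1 0 0 0 0 t11 t12 t22 ^ 4 ∧
      theta2 0 0 0 0 0 0 t11 t12 t22 ^ 4 - theta2 0 0 1 1 0 0 t11 t12 t22 ^ 4 =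
        theta2 1 0 0 0 0 0 t11 t12 t22 ^ 4 + theta2 0 1 1 0 0 0 t11 t12 t22 ^ 4) ∧
    (theta2 0 0 0 0 0 0 t11 t12 t22 ^ 4 - theta2 1 1 0 0 0 0 t11 t12 t22 ^ 4 =
        theta2 0 1 1 0 0 0 t11 t12 t22 ^ 4 + theta2 0 0 0 1 0 0 t11 t12 t22 ^ 4 ∧
      theta2 0 0 0 0 0 0 t11 t12 t22 ^ 4 - theta2 1 1 0 0 0 0 t11 t12 t22 ^ 4 =
        theta2 0 0 1 0 0 0 t11 t12 t22 ^ 4 + theta2 1 0 0 1 0 0 t11 t12 t22 ^ 4) ∧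
    (theta2 0 0 0 0 0 0 t11 t12 t22 ^ 4 - theta2 1 1 1 1 0 0 t11 t12 t22 ^ 4 =
        theta2 1 0 0 0 0 0 t11 t12 t22 ^ 4 + theta2 0 0 1 0 0 0 t11 t12 t22 ^ 4 ∧
      theta2 0 0 0 0 0 0 t11 t12 t22 ^ 4 - theta2 1 1 1 1 0 0 t11 t12 t22 ^ 4 =
        theta2 0 1 0 0 0 0 t11 t12 t22 ^ 4 + theta2 0 0 0 1 0 0 t11 t12 t22 ^ 4) := by
  have θ₀₀ := theta2_zero_zero_pow_four hτ
  have θ₁₀ := theta2_one_zero_pow_four hτ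
  have θ₀₁ := theta2_zero_one_pow_four hτ
  have θ₁₁ := theta2_one_one_pow_four hτ
  have θ₀₀₀₀ := θ₀₀ 0 0
  have θ₀₀₁₀ := θ₀₀ 1 0
  have θ₀₀₀₁ := θ₀₀ 0 1
  have θ₀₀₁₁ := θ₀₀ 1 1
  have θ₁₀₀₀ := θ₁₀ 0
  have θ₁₀₀₁ := θ₁₀ 1
  have θ₀₁₀₀ := θ₀₁ 0
  have θ₀₁₁₀ := θ₀₁ 1
  have θ₁₁₀₀ := θ₁₁ 0
  have θ₁₁₁₁ := θ₁₁ 1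
  simp only [ZMod.val_zero, ZMod.val_one, Nat.cast_zero, Nat.cast_one, pow_zero, pow_one]
    at θ₀₀₀₀ θ₀₀₁₀ θ₀₀₀₁ θ₀₀₁₁ θ₁₀₀₀ θ₁₀₀₁ θ₀₁₀₀ θ₀₁₁₀ θ₁₁₀₀ θ₁₁₁₁
  rw [θ₀₀₀₀, θ₀₀₁₀, θ₀₀₀₁, θ₀₀₁₁, θ₁₀₀₀, θ₁₀₀₁, θ₀₁₀₀, θ₀₁₁₀, θ₁₁₀₀, θ₁₁₁₁]
  refine ⟨⟨?_, ?_⟩, ⟨?_, ?_⟩, ?_, ?_⟩ <;> ring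
end
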